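/- The crawl value function V is strictly monotonically increasing on [0, ∞). -/

import Mathlib

open Real Finset

/-- Normalized residual of the `i`-th Taylor approximation of the exponential:
`R_i(x) = (exp x − ∑_{j=0}^{i} x^j/j!) / exp x`. -/
noncomputable def Rres (i : ℕ) (x : ℝ) : ℝ :=
  (Real.exp x - ∑ j ∈ Finset.range (i + 1), x ^ j / (Nat.factorial j : ℝ)) / Real.exp x

/-- Expected crawl-interval length `ψ(ι) = ∑_{i=0}^{⌊ι/β⌋} (1/γ)·R_i(γ(ι − iβ))`. -/
noncomputable def psi (γ β : ℝ) (ι : ℝ) : ℝ :=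
  ∑ i ∈ Finset.range (⌊ι / β⌋₊ + 1), (1 / γ) * Rres i (γ * (ι - (i : ℝ) * β))

/-- Expected cumulative freshness `w(ι) = ∑_{i=0}^{⌊ι/β⌋} (ν^i/(Δ+ν)^{i+1})·R_i((α+γ)(ι − iβ))`. -/
noncomputable def wfun (α β γ ν Δ : ℝ) (ι : ℝ) : ℝ :=
  ∑ i ∈ Finset.range (⌊ι / β⌋₊ + 1),
    (ν ^ i / (Δ + ν) ^ (i + 1)) * Rres i ((α + γ) * (ι - (i : ℝ) * β))

/-- Crawl value function `V(ι) = μ̃·(w(ι) − exp(−αι)·ψ(ι))`. -/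
noncomputable def Vfun (μ α β γ ν Δ : ℝ) (ι : ℝ) : ℝ :=
  μ * (wfun α β γ ν Δ ι - Real.exp (-(α * ι)) * psi γ β ι)

/-! Put `y = x - i * β`. Since `ν = γ * exp (-(α * β))`, the factor `exp (-(α * x))` equals
`(ν / γ) ^ i * exp (-(α * y))`, so the `i`-th summand of `V x` is `μ * ν ^ i` times
`L (α + γ) y - exp (-(α * y)) * L γ y`, where `L c y = ∫ t in 0..y, t ^ i / i! * exp (-(c * t))`.
Differentiating, the integrands cancel and only `α * exp (-(α * y)) * L γ y` is left, which is
positive. Every summand thus increases from the value `0` that it takes when it enters the sum. -/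

section FloorSum

variable {K M : Type*} [Field K] [LinearOrder K] [IsStrictOrderedRing K] [FloorSemiring K]
  [AddCommMonoid M] [PartialOrder M] [IsOrderedCancelAddMonoid M]

theorem natCast_mul_le_of_mem_range_floor {β x : K} (hβ : 0 < β) (hx : 0 ≤ x) {i : ℕ}
    (hi : i ∈ range (⌊x / β⌋₊ + 1)) : (i : K) * β ≤ x := by
  have hi_floor : i ≤ ⌊x / β⌋₊ := Nat.lt_succ_iff.1 (mem_range.1 hi)
  exact (le_div_iff₀ hβ).1 ((Nat.le_floor_iff (div_nonneg hx hβ.le)).1 hi_floor)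

theorem strictMonoOn_sum_range_floor {β : K} (hβ : 0 < β) {f : ℕ → K → M}
    (hf : ∀ i, StrictMonoOn (f i) (Set.Ici 0)) (hf_zero : ∀ i, 0 ≤ f i 0) :
    StrictMonoOn (fun x ↦ ∑ i ∈ range (⌊x / β⌋₊ + 1), f i (x - i * β)) (Set.Ici 0) := by
  intro a (ha : 0 ≤ a) b (hb : 0 ≤ b) hab
  calc ∑ i ∈ range (⌊a / β⌋₊ + 1), f i (a - i * β)
      < ∑ i ∈ range (⌊a / β⌋₊ + 1), f i (b - i * β) := by
        refine sum_lt_sum_of_nonempty nonempty_range_add_one fun i hi ↦ ?_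
        have hia : (i : K) * β ≤ a := natCast_mul_le_of_mem_range_floor hβ ha hi
        exact hf i (sub_nonneg.2 hia) (sub_nonneg.2 (hia.trans hab.le)) (sub_lt_sub_right hab _)
    _ ≤ ∑ i ∈ range (⌊b / β⌋₊ + 1), f i (b - i * β) := by
        refine sum_le_sum_of_subset_of_nonneg (range_mono (by gcongr)) fun i hi _ ↦ ?_
        have hib : 0 ≤ b - i * β := sub_nonneg.2 (natCast_mul_le_of_mem_range_floor hβ hb hi)
        exact (hf_zero i).trans ((hf i).monotoneOn Set.self_mem_Ici hib hib)

end FloorSum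

theorem hasDerivAt_sum_range_pow_div_factorial {𝕜 : Type*} [NontriviallyNormedField 𝕜]
    [CharZero 𝕜] (i : ℕ) (x : 𝕜) :
    HasDerivAt (fun y ↦ ∑ j ∈ range (i + 1), y ^ j / (Nat.factorial j : 𝕜))
      (∑ j ∈ range i, x ^ j / (Nat.factorial j : 𝕜)) x := by
  induction i with
  | zero => simpa using hasDerivAt_const x (1 : 𝕜)
  | succ i ih =>
    simp only [sum_range_succ _ (i + 1)]
    rw [sum_range_succ _ i]
    refine ih.fun_add (((hasDerivAt_pow (i + 1) x).div_const _).congr_deriv ?_)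
    rw [Nat.factorial_succ, Nat.cast_mul, add_tsub_cancel_right,
      mul_div_mul_left _ _ (Nat.cast_ne_zero.2 i.succ_ne_zero)]

theorem hasDerivAt_exp_neg_mul (c x : ℝ) :
    HasDerivAt (fun y ↦ exp (-(c * y))) (-c * exp (-(c * x))) x := by
  simpa [mul_comm] using ((hasDerivAt_id x).const_mul c).neg.exp

theorem Rres_zero_right (i : ℕ) : Rres i 0 = 0 := by
  simp [Rres, sum_range_succ']

theorem Rres_pos (i : ℕ) {x : ℝ} (hx : 0 < x) : 0 < Rres i x := by
  have hsum := sum_le_exp_of_nonneg hx.le (i + 2)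
  rw [sum_range_succ] at hsum
  have hlast : 0 < x ^ (i + 1) / (Nat.factorial (i + 1) : ℝ) := by positivity
  exact div_pos (by linarith) (exp_pos x)

theorem Rres_eq_one_sub (i : ℕ) (x : ℝ) :
    Rres i x = 1 - (∑ j ∈ range (i + 1), x ^ j / (Nat.factorial j : ℝ)) * exp (-x) := by
  rw [Rres, sub_div, div_self (exp_ne_zero x), exp_neg, div_eq_mul_inv]

theorem hasDerivAt_Rres (i : ℕ) (x : ℝ) :
    HasDerivAt (Rres i) (x ^ i / (Nat.factorial i : ℝ) * exp (-x)) x := by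
  have hexp : HasDerivAt (fun y : ℝ ↦ exp (-y)) (-exp (-x)) x := by
    simpa using hasDerivAt_exp_neg_mul 1 x
  rw [funext (Rres_eq_one_sub i)]
  refine (((hasDerivAt_sum_range_pow_div_factorial i x).fun_mul hexp).const_sub 1).congr_deriv ?_
  rw [sum_range_succ]
  ring

/-- The truncated Laplace transform `∫ t in 0..y, t ^ i / i! * exp (-(c * t))` of a monomial, for
`c ≠ 0`, in the closed form that occurs in `psi` and `wfun`. -/
noncomputable def truncLaplace (i : ℕ) (c y : ℝ) : ℝ :=
  Rres i (c * y) / c ^ (i + 1)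

section TruncLaplace

variable {c : ℝ}

theorem truncLaplace_zero_right (i : ℕ) (c : ℝ) : truncLaplace i c 0 = 0 := by
  simp [truncLaplace, Rres_zero_right]

theorem truncLaplace_pos (i : ℕ) (hc : 0 < c) {y : ℝ} (hy : 0 < y) : 0 < truncLaplace i c y :=
  div_pos (Rres_pos i (mul_pos hc hy)) (pow_pos hc _)

theorem hasDerivAt_truncLaplace (i : ℕ) (hc : c ≠ 0) (y : ℝ) :
    HasDerivAt (truncLaplace i c) (y ^ i / (Nat.factorial i : ℝ) * exp (-(c * y))) y := by
  have hmul : HasDerivAt (fun z ↦ c * z) c y := by simpa using (hasDerivAt_id y).const_mul c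
  refine (((hasDerivAt_Rres i (c * y)).comp y hmul).div_const (c ^ (i + 1))).congr_deriv ?_
  rw [mul_pow, pow_succ]
  field_simp

end TruncLaplace

/-- The `i`-th summand of the crawl value function, up to the factor `μ * ν ^ i`, as a function of
`y = ι - i * β`. -/
noncomputable def crawlTerm (α γ : ℝ) (i : ℕ) (y : ℝ) : ℝ :=
  truncLaplace i (α + γ) y - exp (-(α * y)) * truncLaplace i γ y

section CrawlTerm

variable {α γ : ℝ}

theorem crawlTerm_zero_right (α γ : ℝ) (i : ℕ) : crawlTerm α γ i 0 = 0 := by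
  simp [crawlTerm, truncLaplace_zero_right]

theorem hasDerivAt_crawlTerm (hγ : γ ≠ 0) (hαγ : α + γ ≠ 0) (i : ℕ) (y : ℝ) :
    HasDerivAt (crawlTerm α γ i) (α * exp (-(α * y)) * truncLaplace i γ y) y := by
  have hfresh := hasDerivAt_truncLaplace i hαγ y
  have hcost := (hasDerivAt_exp_neg_mul α y).fun_mul (hasDerivAt_truncLaplace i hγ y)
  refine (hfresh.fun_sub hcost).congr_deriv ?_
  have hexp : exp (-((α + γ) * y)) = exp (-(α * y)) * exp (-(γ * y)) := by
    rw [← exp_add]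
    ring_nf
  rw [hexp]
  ring

theorem strictMonoOn_crawlTerm (hα : 0 < α) (hγ : 0 < γ) (i : ℕ) :
    StrictMonoOn (crawlTerm α γ i) (Set.Ici 0) := by
  have hderiv := hasDerivAt_crawlTerm hγ.ne' (add_pos hα hγ).ne' i
  refine strictMonoOn_of_deriv_pos (convex_Ici 0) (HasDerivAt.continuousOn fun y _ ↦ hderiv y) ?_
  intro y hy
  rw [interior_Ici] at hy
  rw [(hderiv y).deriv]
  exact mul_pos (mul_pos hα (exp_pos _)) (truncLaplace_pos i hγ hy)

end CrawlTerm

section ValueFunction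

variable {α β γ ν Δ : ℝ}

theorem pow_mul_exp_neg_mul_sub (hnu : ν = γ * exp (-(α * β))) (i : ℕ) (x : ℝ) :
    ν ^ i * exp (-(α * (x - i * β))) = γ ^ i * exp (-(α * x)) := by
  rw [hnu, mul_pow, ← exp_nat_mul, mul_assoc, ← exp_add]
  ring_nf

theorem pow_mul_crawlTerm (hγ : γ ≠ 0) (hrates : α + γ = Δ + ν)
    (hnu : ν = γ * exp (-(α * β))) (i : ℕ) (x : ℝ) :
    ν ^ i * crawlTerm α γ i (x - i * β) =
      ν ^ i / (Δ + ν) ^ (i + 1) * Rres i ((α + γ) * (x - i * β)) -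
        exp (-(α * x)) * (1 / γ * Rres i (γ * (x - i * β))) := by
  rw [crawlTerm, mul_sub, ← mul_assoc, pow_mul_exp_neg_mul_sub hnu, ← hrates]
  simp only [truncLaplace]
  congr 1
  · ring
  · rw [pow_succ]
    field_simp

theorem Vfun_eq_sum_crawlTerm (hγ : γ ≠ 0) (hrates : α + γ = Δ + ν)
    (hnu : ν = γ * exp (-(α * β))) (μ x : ℝ) :
    Vfun μ α β γ ν Δ x =
      ∑ i ∈ range (⌊x / β⌋₊ + 1), μ * ν ^ i * crawlTerm α γ i (x - i * β) := by
  simp only [Vfun, wfun, psi, mul_assoc μ, pow_mul_crawlTerm hγ hrates hnu, sum_sub_distrib,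
    ← mul_sum]

end ValueFunction

/-- The crawl value function `V` is strictly monotonically increasing on `[0, ∞)`. -/
theorem stmt_10 (μ α β γ ν Δ : ℝ) (hμ : 0 < μ) (hα : 0 < α) (hβ : 0 < β) (hγ : 0 < γ)
    (hν : 0 < ν) (hΔ : 0 < Δ) (hrates : α + γ = Δ + ν) (hnu : ν = γ * Real.exp (-(α * β))) :
    StrictMonoOn (Vfun μ α β γ ν Δ) (Set.Ici (0 : ℝ)) := by
  have hterm (i : ℕ) : StrictMonoOn (fun y ↦ μ * ν ^ i * crawlTerm α γ i y) (Set.Ici 0) :=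
    (strictMono_mul_left_of_pos (by positivity)).comp_strictMonoOn (strictMonoOn_crawlTerm hα hγ i)
  have hterm_zero (i : ℕ) : 0 ≤ μ * ν ^ i * crawlTerm α γ i 0 := by
    rw [crawlTerm_zero_right, mul_zero]
  rw [funext (Vfun_eq_sum_crawlTerm hγ.ne' hrates hnu μ)]
  exact strictMonoOn_sum_range_floor hβ hterm hterm_zero
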